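/- Let P be a normal logic program over its finite set of atoms 𝒜_P and let S ⊆ 𝒜_P be a stable model of P. Then there exists a successful DProp computation on P whose final true set T^∞ equals S; in particular, the run that at each decision step falsifies an atom of (𝒜_P ∖ S) ∩ U^{k-1} maintains T^k ⊆ S and T^k ∩ F^k = ∅ at every iteration and terminates with T^∞ = S. -/

import Mathlib

/-- A rule of a normal logic program: head atom, positive body atoms, default-negated body atoms. -/
structure Rule (α : Type) where
  head : α
  pos : Finset α
  neg : Finset α

/-- The immediate consequence operator `C_{P,J}(I)`. -/
def imCons {α : Type} (P : Set (Rule α)) (J I : Set α) : Set α :=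
  { a | ∃ r ∈ P, r.head = a ∧ ↑r.pos ⊆ I ∧ ∀ b ∈ r.neg, b ∉ J }

lemma imCons_mono {α : Type} (P : Set (Rule α)) (J : Set α) : Monotone (imCons P J) := by
  rintro I I' h a ⟨r, hr, hh, hp, hn⟩
  exact ⟨r, hr, hh, fun x hx => h (hp hx), hn⟩

/-- `C_{P,J}^∞(I)`: the least fixpoint of `C_{P,J}` above `I`, obtained by iterating from `I`. -/
def imConsInf {α : Type} (P : Set (Rule α)) (J I : Set α) : Set α :=
  OrderHom.lfp ⟨fun X => I ∪ imCons P J X,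
    fun _ _ h => Set.union_subset_union (le_refl I) (imCons_mono P J h)⟩

/-- The Gelfond–Lifschitz reduct `P^S`. -/
def reduct {α : Type} (P : Set (Rule α)) (S : Set α) : Set (Rule α) :=
  { r' | ∃ r ∈ P, (∀ b ∈ r.neg, b ∉ S) ∧ r' = ⟨r.head, r.pos, ∅⟩ }

/-- `M` is a model of the program `P`. -/
def isModel {α : Type} (P : Set (Rule α)) (M : Set α) : Prop :=
  ∀ r ∈ P, ↑r.pos ⊆ M → (∀ b ∈ r.neg, b ∉ M) → r.head ∈ M

/-- `S` is a stable model of `P`: `S` is the least model of the reduct `P^S`. -/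
def isStableModel {α : Type} (P : Set (Rule α)) (S : Set α) : Prop :=
  isModel (reduct P S) S ∧ ∀ M : Set α, isModel (reduct P S) M → S ⊆ M

/-!
A stable model `S` is a fixpoint of the operator `Γ J = C_{P,J}^∞(∅)`, which is antitone in `J`.
Along a run the propagation steps telescope to `T^k = Γ (𝒜 ∖ F^k)`, so falsifying only atoms
outside `S` keeps `T^k ⊆ Γ S = S`, and once all of `𝒜 ∖ S` is falsified, `T^k = Γ S = S`.
-/

lemma imCons_antitone {α : Type} (P : Set (Rule α)) (I : Set α) :
    Antitone fun J => imCons P J I := by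
  rintro J J' hJ a ⟨r, hr, hhead, hpos, hneg⟩
  exact ⟨r, hr, hhead, hpos, fun b hb hbJ => hneg b hb (hJ hbJ)⟩

section imConsInf

variable {α : Type} {P : Set (Rule α)} {I J J' X : Set α}

lemma union_imCons_imConsInf (P : Set (Rule α)) (J I : Set α) :
    I ∪ imCons P J (imConsInf P J I) = imConsInf P J I :=
  OrderHom.map_lfp ⟨fun X => I ∪ imCons P J X, _⟩

lemma subset_imConsInf : I ⊆ imConsInf P J I :=
  Set.subset_union_left.trans (union_imCons_imConsInf P J I).subset

lemma imCons_imConsInf_subset : imCons P J (imConsInf P J I) ⊆ imConsInf P J I :=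
  Set.subset_union_right.trans (union_imCons_imConsInf P J I).subset

lemma imConsInf_subset (hI : I ⊆ X) (hX : imCons P J X ⊆ X) : imConsInf P J I ⊆ X :=
  OrderHom.lfp_le _ (Set.union_subset hI hX)

lemma imConsInf_antitone (P : Set (Rule α)) (I : Set α) : Antitone fun J => imConsInf P J I :=
  fun _ _ hJ => imConsInf_subset subset_imConsInf
    ((imCons_antitone P _ hJ).trans imCons_imConsInf_subset)

lemma imConsInf_imConsInf (hJ : J' ⊆ J) :
    imConsInf P J' (imConsInf P J I) = imConsInf P J' I :=
  (imConsInf_subset (imConsInf_antitone P I hJ) imCons_imConsInf_subset).antisymm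
    (imConsInf_subset (subset_imConsInf.trans subset_imConsInf) imCons_imConsInf_subset)

end imConsInf

lemma isModel_reduct_iff {α : Type} {P : Set (Rule α)} {S M : Set α} :
    isModel (reduct P S) M ↔ imCons P S M ⊆ M := by
  constructor
  · rintro hM _ ⟨r, hr, rfl, hpos, hneg⟩
    exact hM ⟨r.head, r.pos, ∅⟩ ⟨r, hr, hneg, rfl⟩ hpos (by simp)
  · rintro hM _ ⟨r, hr, hneg, rfl⟩ hpos -
    exact hM ⟨r, hr, rfl, hpos, hneg⟩

/-- The true set of a DProp run in which exactly the atoms of `F` have been falsified. By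
`imConsInf_propagation` it depends only on the set `F`, not on the order of the decisions. -/
def propagation {α : Type} (P : Set (Rule α)) (F : Set α) : Set α :=
  imConsInf P (Set.univ \ F) ∅

section propagation

variable {α : Type} {P : Set (Rule α)} {F F' S : Set α}

lemma propagation_mono (P : Set (Rule α)) : Monotone (propagation P) :=
  fun _ _ hF => imConsInf_antitone P ∅ (Set.sdiff_subset_sdiff_right hF)

lemma imConsInf_propagation (hF : F ⊆ F') :
    imConsInf P (Set.univ \ F') (propagation P F) = propagation P F' :=
  imConsInf_imConsInf (Set.sdiff_subset_sdiff_right hF)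

lemma isStableModel.propagation_compl (hS : isStableModel P S) : propagation P Sᶜ = S := by
  rw [propagation, ← Set.compl_eq_univ_sdiff, compl_compl]
  exact (imConsInf_subset (Set.empty_subset S) (isModel_reduct_iff.mp hS.1)).antisymm
    (hS.2 _ (isModel_reduct_iff.mpr imCons_imConsInf_subset))

lemma isStableModel.propagation_subset (hS : isStableModel P S) (hF : F ⊆ Sᶜ) :
    propagation P F ⊆ S :=
  (propagation_mono P hF).trans hS.propagation_compl.subset

lemma isStableModel.disjoint_propagation (hS : isStableModel P S) (hF : F ⊆ Sᶜ) :
    Disjoint (propagation P F) F :=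
  disjoint_compl_right.mono (hS.propagation_subset hF) hF

end propagation

lemma exists_seq_insert_of_finite {α : Type*} {s : Set α} (hs : s.Finite) :
    ∃ (n : ℕ) (F : ℕ → Set α), F 0 = ∅ ∧ F n = s ∧ (∀ k, F k ⊆ s) ∧
      ∀ k < n, ∃ a ∈ s \ F k, F (k + 1) = insert a (F k) := by
  have := hs.to_subtype
  obtain ⟨G, hbot, n, htop, hcov⟩ :=
    exists_covBy_seq_of_wellFoundedLT_wellFoundedGT (Set s)
  refine ⟨n, fun k => Subtype.val '' G k, ?_, ?_, fun k => Subtype.coe_image_subset s (G k), ?_⟩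
  · simp [isMin_iff_eq_bot.mp hbot]
  · simp [isMax_iff_eq_top.mp htop]
  · intro k hk
    obtain ⟨a, ha, hinsert⟩ := Set.covBy_iff_exists_insert.mp (hcov k hk)
    refine ⟨a, ⟨a.2, ?_⟩, ?_⟩
    · simpa using ha
    · simp only [← hinsert, Set.image_insert_eq]

theorem stable_model_has_successful_dprop_run_general {α : Type}
    (P : Set (Rule α)) (S : Set α) (hS : isStableModel P S) (hfin : Sᶜ.Finite) :
    ∃ (m : ℕ) (T F U : ℕ → Set α),
      T 0 = imConsInf P Set.univ ∅ ∧
      F 0 = (∅ : Set α) ∧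
      U 0 = Set.univ \ (T 0 ∪ F 0) ∧
      (∀ k, 1 ≤ k → k ≤ m → ∃ a ∈ (Set.univ \ S) ∩ U (k - 1), F k = F (k - 1) ∪ {a}) ∧
      (∀ k, 1 ≤ k → k ≤ m → T k = imConsInf P (Set.univ \ F k) (T (k - 1))) ∧
      (∀ k, 1 ≤ k → k ≤ m → U k = U (k - 1) \ (T k ∪ F k)) ∧
      (∀ k ≤ m, T k ⊆ S ∧ T k ∩ F k = ∅) ∧
      U m = ∅ ∧ T m ∩ F m = ∅ ∧ T m = S := by
  obtain ⟨m, F, hF0, hFm, hFS, hstep⟩ := exists_seq_insert_of_finite hfin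
  have hFmono : ∀ k < m, F k ⊆ F (k + 1) := fun k hk => by
    obtain ⟨a, -, hinsert⟩ := hstep k hk
    exact hinsert ▸ Set.subset_insert a (F k)
  have hTS k : propagation P (F k) ⊆ S := hS.propagation_subset (hFS k)
  have hTF k : propagation P (F k) ∩ F k = ∅ := (hS.disjoint_propagation (hFS k)).inter_eq
  have hTm : propagation P (F m) = S := hFm ▸ hS.propagation_compl
  have hUm : Set.univ \ (propagation P (F m) ∪ F m) = ∅ := by
    rw [hTm, hFm, Set.union_compl_self, Set.sdiff_self]
  refine ⟨m, fun k => propagation P (F k), F, fun k => Set.univ \ (propagation P (F k) ∪ F k),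
    by simp [propagation, hF0], hF0, rfl, ?decision, ?propagation, ?undecided,
    fun k _ => ⟨hTS k, hTF k⟩, hUm, hTF m, hTm⟩
  all_goals
    rintro (_ | k) hpos hk
    · contradiction
  case decision =>
    obtain ⟨a, ⟨haS, haF⟩, hinsert⟩ := hstep k hk
    have haT : a ∉ propagation P (F k) := fun h => haS (hTS k h)
    exact ⟨a, ⟨⟨trivial, haS⟩, trivial, not_or.mpr ⟨haT, haF⟩⟩, by simp [hinsert]⟩
  case propagation => exact (imConsInf_propagation (hFmono k hk)).symm
  case undecided =>
    have hdecided := Set.union_subset_union (propagation_mono P (hFmono k hk)) (hFmono k hk)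
    simp only [Nat.add_sub_cancel, Set.sdiff_sdiff, Set.union_eq_self_of_subset_left hdecided]

/-- Every stable model `S` of `P` is the final true set of a successful
DProp computation: the run that at each decision step falsifies an atom of
`(𝒜 ∖ S) ∩ U^{k-1}` maintains `T^k ⊆ S` and `T^k ∩ F^k = ∅`, and terminates with
`T^∞ = S`. -/
theorem stable_model_has_successful_dprop_run {α : Type} [Fintype α]
    (P : Set (Rule α)) (S : Set α) (hS : isStableModel P S) :
    ∃ (m : ℕ) (T F U : ℕ → Set α),
      T 0 = imConsInf P Set.univ ∅ ∧
      F 0 = (∅ : Set α) ∧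
      U 0 = Set.univ \ (T 0 ∪ F 0) ∧
      (∀ k, 1 ≤ k → k ≤ m → ∃ a ∈ (Set.univ \ S) ∩ U (k - 1), F k = F (k - 1) ∪ {a}) ∧
      (∀ k, 1 ≤ k → k ≤ m → T k = imConsInf P (Set.univ \ F k) (T (k - 1))) ∧
      (∀ k, 1 ≤ k → k ≤ m → U k = U (k - 1) \ (T k ∪ F k)) ∧
      (∀ k ≤ m, T k ⊆ S ∧ T k ∩ F k = ∅) ∧
      U m = ∅ ∧ T m ∩ F m = ∅ ∧ T m = S :=
  stable_model_has_successful_dprop_run_general P S hS (Set.toFinite _)
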